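/- Let s ≥ 2 and 2 ≤ r' ≤ s' be integers with s' − r' < 2(s − 1), and let F : U → ℂ^{r'×s'} be a local orthogonal map in chart form from 𝒢(1,s) to 𝒢(r',s') that is non-null (there exists z₁ ∈ U with F(z₁)·F(z₁)ᴴ ≠ I_{r'}). Then there exist ℂ-linear subspaces N, K ⊆ ℂ^{r'+s'} such that: N has dimension r' − 1 and is totally isotropic for ⟨·,·⟩_{r',s'}; K has dimension s' − r' + 2 and decomposes as K = K₊ ⊕ K₋ where ⟨·,·⟩_{r',s'} is positive definite on K₊ with dim K₊ = 1, negative definite on K₋ with dim K₋ = s' − r' + 1, and ⟨u,v⟩_{r',s'} = 0 for u ∈ K₊, v ∈ K₋; moreover ⟨u,v⟩_{r',s'} = 0 for all u ∈ N, v ∈ K; and N ⊆ rowSpan([I_{r'} | F(z)]) ⊆ N ⊕ K for every z ∈ U. -/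

import Mathlib

open scoped BigOperators
open Matrix

noncomputable section

/-- Hermitian dot product of row vectors: `z ⬝ wᴴ`. -/
def cdot {n : ℕ} (z w : Fin n → ℂ) : ℂ := ∑ i, z i * (starRingEnd ℂ) (w i)

/-- The indefinite Hermitian inner product of signature `(a,b)` on `ℂ^{a+b}`. -/
def iip (a b : ℕ) (z w : Fin (a + b) → ℂ) : ℂ :=
  ∑ i : Fin (a + b), (if (i : ℕ) < a then (1 : ℂ) else -1) * z i * (starRingEnd ℂ) (w i)

/-- Row span of a matrix: the ℂ-linear span of its rows. -/
def rowSpan {m n : ℕ} (A : Matrix (Fin m) (Fin n) ℂ) : Submodule ℂ (Fin n → ℂ) :=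
  Submodule.span ℂ (Set.range fun i => A i)

/-- The chart matrix `[I_r | Z]`. -/
def chartMat (r s : ℕ) (Z : Matrix (Fin r) (Fin s) ℂ) : Matrix (Fin r) (Fin (r + s)) ℂ :=
  Matrix.of fun i j =>
    if h : (j : ℕ) < r then (if (i : ℕ) = (j : ℕ) then 1 else 0)
    else Z i ⟨(j : ℕ) - r, by have := j.isLt; omega⟩

section helpers
open Filter Topology

lemma id_ball {E : Type*} [NormedAddCommGroup E] [NormedSpace ℂ E] {B : Set E} (hB : IsOpen B)
    (hc : Convex ℝ B) {f : E → ℂ} (hf : DifferentiableOn ℂ f B) {y : E} (hy : y ∈ B)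
    (h0 : ∀ᶠ x in 𝓝 y, f x = 0) : ∀ p ∈ B, f p = 0 := by
  intro p hp
  let ℓ : ℂ → E := fun t => y + t • (p - y)
  have hℓ : Continuous ℓ := by fun_prop
  have hℓd : Differentiable ℂ ℓ := by fun_prop
  have hop : IsOpen (ℓ ⁻¹' B) := hB.preimage hℓ
  have hconv : Convex ℝ (ℓ ⁻¹' B) := by
    intro a ha b hb u v hu hv huv
    have := hc ha hb hu hv huv
    have e : u • ℓ a + v • ℓ b = ℓ (u • a + v • b) := by
      simp only [ℓ, smul_add, add_smul, smul_assoc]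
      have h2 : u • y + v • y = y := by rw [← add_smul, huv, one_smul]
      rw [add_add_add_comm, h2]
    rw [e] at this
    exact this
  have hd : DifferentiableOn ℂ (f ∘ ℓ) (ℓ ⁻¹' B) :=
    hf.comp hℓd.differentiableOn (fun x hx => hx)
  have han := hd.analyticOnNhd hop
  have h00 : (f ∘ ℓ) =ᶠ[𝓝 0] 0 := by
    have : Tendsto ℓ (𝓝 0) (𝓝 y) := by
      have := hℓ.tendsto 0
      simpa [ℓ] using this
    exact this.eventually h0
  have := han.eqOn_zero_of_preconnected_of_eventuallyEq_zero hconv.isPreconnected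
    (by simpa [ℓ] using hy : (0:ℂ) ∈ ℓ ⁻¹' B) h00 (by simpa [ℓ] using hp : (1:ℂ) ∈ ℓ ⁻¹' B)
  simpa [ℓ] using this

lemma id_thm {E : Type*} [NormedAddCommGroup E] [NormedSpace ℂ E] {U : Set E} (hU : IsOpen U)
    (hc : IsPreconnected U) {f : E → ℂ} (hf : DifferentiableOn ℂ f U) {y : E} (hy : y ∈ U)
    (h0 : ∀ᶠ x in 𝓝 y, f x = 0) : ∀ p ∈ U, f p = 0 := by
  have key : U ⊆ {x | ∀ᶠ t in 𝓝 x, f t = 0} := by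
    apply hc.subset_of_closure_inter_subset isOpen_setOfPred_eventually_nhds ⟨y, hy, h0⟩
    rintro x ⟨hx, hxU⟩
    obtain ⟨r, hr, hb⟩ := Metric.isOpen_iff.1 hU x hxU
    obtain ⟨y', hy', hd⟩ := Metric.mem_closure_iff.1 hx r hr
    have := id_ball Metric.isOpen_ball (convex_ball x r) (hf.mono hb) (y := y')
      (by rw [Metric.mem_ball, dist_comm]; exact hd) hy'
    exact Filter.eventually_of_mem (Metric.ball_mem_nhds x hr) this
  intro p hp
  exact (key hp).self_of_nhds

/-- product version -/
lemma prod_nonzero {E ι : Type*} [NormedAddCommGroup E] [NormedSpace ℂ E] {U : Set E}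
    (hU : IsOpen U)
    (hc : IsPreconnected U) (f : ι → E → ℂ) (hf : ∀ i, DifferentiableOn ℂ (f i) U)
    (hne : ∀ i, ∃ p ∈ U, f i p ≠ 0) (S : Finset ι) {y : E} (hy : y ∈ U) :
    ∃ᶠ x in 𝓝 y, ∀ i ∈ S, f i x ≠ 0 := by
  classical
  induction S using Finset.induction_on generalizing y with
  | empty => simp only [Finset.notMem_empty, IsEmpty.forall_iff, implies_true]; exact Filter.Frequently.of_forall (by simp)
  | insert a S ha ih =>
    rw [Filter.frequently_iff]
    intro V hV
    have h1 := ih hy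
    obtain ⟨W, hWV, hWo, hyW⟩ := mem_nhds_iff.1 (Filter.inter_mem hV (hU.mem_nhds hy))
    have h2 : ∃ x ∈ W, f a x ≠ 0 := by
      by_contra hcon
      push Not at hcon
      obtain ⟨p, hp, hpn⟩ := hne a
      exact hpn (id_thm hU hc (hf a) hy (Filter.eventually_of_mem (hWo.mem_nhds hyW) hcon) p hp)
    obtain ⟨x, hxW, hx⟩ := h2
    have hxU := (hWV hxW).2
    have hcont : ContinuousAt (f a) x := ((hf a).continuousOn).continuousAt (hU.mem_nhds hxU)
    have h3 : ∀ᶠ t in 𝓝 x, f a t ≠ 0 ∧ t ∈ W :=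
      (hcont.eventually_ne hx).and (hWo.mem_nhds hxW)
    obtain ⟨t, ht, ht1, ht2⟩ := ((ih hxU).and_eventually h3).exists
    refine ⟨t, (hWV ht2).1, ?_⟩
    intro i hi
    rcases Finset.mem_insert.1 hi with rfl | h
    · exact ht1
    · exact ht i h

open scoped Matrix.Norms.Operator

lemma skew_unique {n : ℕ} (q : Matrix (Fin n) (Fin n) ℂ → ℂ)
    (hq : ∀ᶠ g in 𝓝 0, DifferentiableAt ℂ q g)
    (h0 : ∀ᶠ g : Matrix (Fin n) (Fin n) ℂ in 𝓝 0, gᴴ = - g → q g = 0) :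
    ∀ᶠ g in 𝓝 0, q g = 0 := by
  obtain ⟨r, hr, hb⟩ := Metric.eventually_nhds_iff_ball.1 (hq.and h0)
  let S : Matrix (Fin n) (Fin n) ℂ → Matrix (Fin n) (Fin n) ℂ := fun X => (1/2:ℂ) • (X - Xᴴ)
  let T : Matrix (Fin n) (Fin n) ℂ → Matrix (Fin n) (Fin n) ℂ :=
    fun X => (-Complex.I/2:ℂ) • (X + Xᴴ)
  have hS : Continuous S := by fun_prop
  have hT : Continuous T := by fun_prop
  have hS0 : ∀ᶠ X in 𝓝 0, ‖S X‖ < r/4 := by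
    have : Tendsto (fun X => ‖S X‖) (𝓝 0) (𝓝 ‖S 0‖) := (hS.norm).tendsto 0
    apply this.eventually_lt_const
    simp [S]; positivity
  have hT0 : ∀ᶠ X in 𝓝 0, ‖T X‖ < r/4 := by
    have : Tendsto (fun X => ‖T X‖) (𝓝 0) (𝓝 ‖T 0‖) := (hT.norm).tendsto 0
    apply this.eventually_lt_const
    simp [T]; positivity
  filter_upwards [hS0, hT0] with X h1 h2
  let ℓ : ℂ → Matrix (Fin n) (Fin n) ℂ := fun t => S X + t • T X
  have hℓd : Differentiable ℂ ℓ := by fun_prop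
  have hmem : ∀ t ∈ Metric.ball (0:ℂ) 2, ℓ t ∈ Metric.ball 0 r := by
    intro t ht
    rw [mem_ball_zero_iff] at ht ⊢
    calc ‖ℓ t‖ ≤ ‖S X‖ + ‖t • T X‖ := norm_add_le _ _
      _ = ‖S X‖ + ‖t‖ * ‖T X‖ := by rw [norm_smul t]
      _ < r := by nlinarith [norm_nonneg (T X), norm_nonneg t]
  have hd : DifferentiableOn ℂ (q ∘ ℓ) (Metric.ball 0 2) := by
    intro t ht
    exact ((hb _ (hmem t ht)).1.comp t (hℓd t)).differentiableWithinAt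
  have han := hd.analyticOnNhd Metric.isOpen_ball
  have hSs : (S X)ᴴ = - S X := by
    simp only [S, conjTranspose_smul, conjTranspose_sub, conjTranspose_conjTranspose]
    simp [← smul_neg]
  have hTs : (T X)ᴴ = - T X := by
    simp only [T, conjTranspose_smul, conjTranspose_add, conjTranspose_conjTranspose]
    rw [← neg_smul, add_comm]
    congr 1
    simp [neg_div]
  have hreal : ∀ t : ℝ, (t:ℂ) ∈ Metric.ball (0:ℂ) 2 → (q ∘ ℓ) t = 0 := by
    intro t ht
    apply (hb _ (hmem t ht)).2
    simp only [ℓ, conjTranspose_add, conjTranspose_smul, hSs, hTs]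
    simp; abel
  have hfreq : ∃ᶠ t in 𝓝[≠] (0:ℂ), (q ∘ ℓ) t = 0 := by
    have ht : Tendsto (fun t : ℝ => (t:ℂ)) (𝓝[>] (0:ℝ)) (𝓝[≠] (0:ℂ)) := by
      apply tendsto_nhdsWithin_iff.2
      constructor
      · exact ((Complex.continuous_ofReal.tendsto' 0 0 (by simp))).mono_left nhdsWithin_le_nhds
      · filter_upwards [self_mem_nhdsWithin] with t ht
        simpa using ne_of_gt ht
    apply ht.frequently
    apply Filter.Eventually.frequently
    have : ∀ᶠ t:ℝ in 𝓝[>] 0, (t:ℂ) ∈ Metric.ball (0:ℂ) 2 := by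
      apply (ht.mono_right nhdsWithin_le_nhds).eventually
      exact Metric.ball_mem_nhds _ (by norm_num)
    filter_upwards [this] with t ht using hreal t ht
  have := han.eqOn_zero_of_preconnected_of_frequently_eq_zero
    (convex_ball (0:ℂ) 2).isPreconnected (by simp) hfreq (x := Complex.I) (by simp)
  have e : ℓ Complex.I = X := by
    simp only [ℓ, S, T, smul_smul]
    have : Complex.I * (-Complex.I / 2) = 1/2 := by
      linear_combination (-1/2) * Complex.I_mul_I
    rw [this, ← smul_add]
    simp [← two_smul ℂ X, smul_smul]
  simpa [e] using this

lemma unitary_unique {n : ℕ} (q : Matrix (Fin n) (Fin n) ℂ → ℂ)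
    (hq : ∀ᶠ g in 𝓝 1, DifferentiableAt ℂ q g)
    (h0 : ∀ᶠ g : Matrix (Fin n) (Fin n) ℂ in 𝓝 1, gᴴ * g = 1 → q g = 0) :
    ∀ᶠ g in 𝓝 1, q g = 0 := by
  let e : Matrix (Fin n) (Fin n) ℂ → Matrix (Fin n) (Fin n) ℂ := NormedSpace.exp
  have he0 : e 0 = 1 := NormedSpace.exp_zero
  have hst : HasStrictFDerivAt e (ContinuousLinearMap.id ℂ _ ) 0 := hasStrictFDerivAt_exp_zero
  have hmap : map e (𝓝 0) = 𝓝 1 := by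
    rw [← he0]
    exact hst.map_nhds_eq_of_equiv (f' := ContinuousLinearEquiv.refl ℂ _)
  have htend : Tendsto e (𝓝 0) (𝓝 1) := hmap.le
  have hdiff : ∀ x, DifferentiableAt ℂ e x := by
    intro x
    exact (NormedSpace.exp_analytic (𝕂 := ℂ) x).differentiableAt
  have := skew_unique (q ∘ e) ?_ ?_
  · rw [← hmap]
    exact this
  · filter_upwards [htend.eventually hq] with x hx
    exact hx.comp x (hdiff x)
  · filter_upwards [htend.eventually h0] with x hx hs
    apply hx
    have h1 : (e x)ᴴ = e (-x) := by rw [← hs]; exact (Matrix.exp_conjTranspose x).symm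
    rw [h1, ← he0, ← neg_add_cancel x]
    exact (Matrix.exp_add_of_commute _ _ (by simp)).symm
end helpers

section helpers
open Filter Topology
open scoped Matrix.Norms.Operator

lemma cdot_eq {n : ℕ} (z w : Fin n → ℂ) : cdot z w = z ⬝ᵥ star w := rfl

lemma cdot_add_left {n : ℕ} (x y w : Fin n → ℂ) : cdot (x + y) w = cdot x w + cdot y w := by
  simp [cdot_eq]
lemma cdot_add_right {n : ℕ} (x y w : Fin n → ℂ) : cdot w (x + y) = cdot w x + cdot w y := by
  simp [cdot_eq]
lemma cdot_smul_left {n : ℕ} (c : ℂ) (x w : Fin n → ℂ) : cdot (c • x) w = c * cdot x w := by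
  simp [cdot_eq]
lemma cdot_smul_right {n : ℕ} (c : ℂ) (x w : Fin n → ℂ) :
    cdot x (c • w) = (starRingEnd ℂ) c * cdot x w := by
  simp [cdot_eq]
lemma cdot_conj {n : ℕ} (x w : Fin n → ℂ) : (starRingEnd ℂ) (cdot x w) = cdot w x := by
  simp [cdot, mul_comm]
open scoped ComplexOrder in
lemma cdot_self_eq_zero {n : ℕ} {x : Fin n → ℂ} (h : cdot x x = 0) : x = 0 := by
  rw [cdot_eq, dotProduct_comm, dotProduct_star_self_eq_zero] at h
  exact h

lemma cdot_unitary {n : ℕ} {g : Matrix (Fin n) (Fin n) ℂ} (hg : gᴴ * g = 1) (z w : Fin n → ℂ) :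
    cdot (g *ᵥ z) (g *ᵥ w) = cdot z w := by
  rw [cdot_eq, cdot_eq, star_mulVec, dotProduct_comm, ← dotProduct_mulVec, mulVec_mulVec, hg,
    one_mulVec, dotProduct_comm]

lemma mulVec_diff {n : ℕ} (v : Fin n → ℂ) :
    Differentiable ℂ (fun g : Matrix (Fin n) (Fin n) ℂ => g *ᵥ v) := by
  let L : Matrix (Fin n) (Fin n) ℂ →ₗ[ℂ] (Fin n → ℂ) :=
    { toFun := fun g => g *ᵥ v
      map_add' := fun a b => Matrix.add_mulVec a b v
      map_smul' := fun a b => Matrix.smul_mulVec a b v }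
  exact L.toContinuousLinearMap.differentiable

lemma pair_unique {n : ℕ} (P : (Fin n → ℂ) × (Fin n → ℂ) → ℂ) (z0 u : Fin n → ℂ)
    (hz : cdot z0 z0 = 1) (hu : cdot u z0 = 0) (hc : cdot u u ≠ 0)
    (h : ∀ᶠ g : Matrix (Fin n) (Fin n) ℂ in 𝓝 1, P (g *ᵥ z0, g *ᵥ (z0 + u)) = 0) :
    ∀ᶠ p in 𝓝 (z0, z0 + u), P p = 0 := by
  let G : (Fin n → ℂ) × (Fin n → ℂ) → Matrix (Fin n) (Fin n) ℂ := fun p =>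
    1 + vecMulVec (p.1 - z0) (star z0) + (cdot u u)⁻¹ • vecMulVec ((p.2 - p.1) - u) (star u)
  have hG : Continuous G := by
    apply continuous_matrix
    intro i j
    simp only [G, Matrix.add_apply, Matrix.smul_apply, vecMulVec_apply, Pi.sub_apply]
    fun_prop
  have hG1 : G (z0, z0 + u) = 1 := by
    simp [G]
  have hu' : cdot z0 u = 0 := by rw [← cdot_conj, hu]; simp
  have e1 : ∀ p, G p *ᵥ z0 = p.1 := by
    intro p
    simp only [G, add_mulVec, one_mulVec, smul_mulVec, vecMulVec_mulVec]
    rw [dotProduct_comm, ← cdot_eq, dotProduct_comm (star u), ← cdot_eq, hz, hu']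
    simp
  have e2 : ∀ p, G p *ᵥ u = p.2 - p.1 := by
    intro p
    simp only [G, add_mulVec, one_mulVec, smul_mulVec, vecMulVec_mulVec]
    rw [dotProduct_comm, ← cdot_eq, dotProduct_comm (star u), ← cdot_eq, hu]
    simp [smul_smul, hc]
  have ht : Tendsto G (𝓝 (z0, z0 + u)) (𝓝 1) := by
    rw [← hG1]; exact hG.tendsto _
  filter_upwards [ht.eventually h] with p hp
  rw [mulVec_add, e1, e2] at hp
  simpa using hp

lemma single_unique {n : ℕ} (P : (Fin n → ℂ) → ℂ) (z0 : Fin n → ℂ)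
    (hz : cdot z0 z0 = 1)
    (h : ∀ᶠ g : Matrix (Fin n) (Fin n) ℂ in 𝓝 1, P (g *ᵥ z0) = 0) :
    ∀ᶠ p in 𝓝 z0, P p = 0 := by
  let G : (Fin n → ℂ) → Matrix (Fin n) (Fin n) ℂ := fun p =>
    1 + vecMulVec (p - z0) (star z0)
  have hG : Continuous G := by
    apply continuous_matrix
    intro i j
    simp only [G, Matrix.add_apply, vecMulVec_apply, Pi.sub_apply]
    fun_prop
  have hG1 : G z0 = 1 := by
    simp [G]
  have e1 : ∀ p, G p *ᵥ z0 = p := by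
    intro p
    simp only [G, add_mulVec, one_mulVec, vecMulVec_mulVec]
    rw [dotProduct_comm, ← cdot_eq, hz]
    simp
  have ht : Tendsto G (𝓝 z0) (𝓝 1) := by
    rw [← hG1]; exact hG.tendsto _
  filter_upwards [ht.eventually h] with p hp
  rwa [e1] at hp

lemma mulVec_mem {n : ℕ} {U : Set (Fin n → ℂ)} (hU : IsOpen U) {v : Fin n → ℂ} (hv : v ∈ U) :
    ∀ᶠ g : Matrix (Fin n) (Fin n) ℂ in 𝓝 1, g *ᵥ v ∈ U := by
  have : Tendsto (fun g : Matrix (Fin n) (Fin n) ℂ => g *ᵥ v) (𝓝 1) (𝓝 v) := by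
    have := (mulVec_diff v).continuous.tendsto 1
    rwa [one_mulVec] at this
  exact this.eventually (hU.mem_nhds hv)

lemma sphere_unique {n : ℕ} {U : Set (Fin n → ℂ)} (hU : IsOpen U) (hc : IsPreconnected U)
    {f : (Fin n → ℂ) → ℂ} (hf : DifferentiableOn ℂ f U) {z0 : Fin n → ℂ} (hz0 : z0 ∈ U)
    (hz : cdot z0 z0 = 1) (h : ∀ z ∈ U, cdot z z = 1 → f z = 0) : ∀ z ∈ U, f z = 0 := by
  apply id_thm hU hc hf hz0
  apply single_unique f z0 hz
  apply unitary_unique (fun g => f (g *ᵥ z0))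
  · filter_upwards [mulVec_mem hU hz0] with g hg
    exact ((hf _ hg).differentiableAt (hU.mem_nhds hg)).comp g (mulVec_diff z0 g)
  · filter_upwards [mulVec_mem hU hz0] with g hg hgu
    apply h _ hg
    rw [cdot_unitary hgu, hz]

lemma exists_orth {n : ℕ} (z0 : Fin (n+1) → ℂ) (hz : cdot z0 z0 = 1) :
    ∃ u : Fin n → Fin (n+1) → ℂ, (∀ k, cdot (u k) z0 = 0) ∧
      ∀ k l, cdot (u k) (u l) = if k = l then 1 else 0 := by
  let E := EuclideanSpace ℂ (Fin (n+1))
  let v : E := WithLp.toLp 2 z0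
  have hin : ∀ x y : E, inner ℂ x y = cdot y.ofLp x.ofLp := by
    intro x y
    rw [EuclideanSpace.inner_eq_star_dotProduct]; rfl
  have hv : v ≠ 0 := by
    intro h
    have : inner ℂ v v = 0 := by rw [h]; simp
    rw [hin] at this
    simp [v, hz] at this
  have : Fact (Module.finrank ℂ E = n + 1) := ⟨by simp [E]⟩
  have hfr := Submodule.finrank_orthogonal_span_singleton (𝕜 := ℂ) (n := n) hv
  let b := (stdOrthonormalBasis ℂ (ℂ ∙ v)ᗮ).reindex (finCongr hfr)
  refine ⟨fun k => ((b k : (ℂ ∙ v)ᗮ) : E).ofLp, ?_, ?_⟩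
  · intro k
    have := Submodule.mem_orthogonal_singleton_iff_inner_right.1 (b k).2
    rwa [hin] at this
  · intro k l
    rw [← hin, ← Submodule.coe_inner, orthonormal_iff_ite.1 b.orthonormal]
    simp [eq_comm]

lemma orth_dim {ι : Type*} [Fintype ι] {m : ℕ} (W : ι → Submodule ℂ (Fin m → ℂ))
    (h : ∀ k l, k ≠ l → ∀ x ∈ W k, ∀ y ∈ W l, cdot x y = 0) :
    ∑ k, Module.finrank ℂ (W k) ≤ m := by
  classical
  have key : ∀ S : Finset ι, ∑ k ∈ S, Module.finrank ℂ (W k) =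
      Module.finrank ℂ (⨆ k ∈ S, W k : Submodule ℂ (Fin m → ℂ)) := by
    intro S
    induction S using Finset.induction_on with
    | empty => rw [show (⨆ k ∈ (∅ : Finset ι), W k) = ⊥ by simp]; simp
    | insert a S ha ih =>
      rw [Finset.sum_insert ha, ih, Finset.iSup_insert,
        ← Submodule.finrank_sup_add_finrank_inf_eq]
      have : W a ⊓ (⨆ k ∈ S, W k) = ⊥ := by
        rw [eq_bot_iff]
        rintro x ⟨hx1, hx2⟩
        have hall : ∀ y ∈ (⨆ k ∈ S, W k), cdot y x = 0 := by
          let O : Submodule ℂ (Fin m → ℂ) :=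
            { carrier := {y | cdot y x = 0}
              add_mem' := by
                intro p q hp hq
                simp only [Set.mem_ofPred_eq] at *
                rw [cdot_add_left, hp, hq, add_zero]
              zero_mem' := by simp [cdot]
              smul_mem' := by
                intro c p hp
                simp only [Set.mem_ofPred_eq] at *
                rw [cdot_smul_left, hp, mul_zero] }
          have : (⨆ k ∈ S, W k) ≤ O := by
            refine iSup₂_le ?_
            intro k hk y hy
            exact h k a (by rintro rfl; exact ha hk) y hy x hx1
          exact fun y hy => this hy
        exact cdot_self_eq_zero (hall x hx2)
      rw [this]; simp
  rw [key]
  refine (Submodule.finrank_le _).trans (by simp)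

lemma range_orth {r m : ℕ} {A B : Matrix (Fin r) (Fin m) ℂ} (h : A * Bᴴ = 0) :
    ∀ x ∈ LinearMap.range A.vecMulLinear, ∀ y ∈ LinearMap.range B.vecMulLinear, cdot x y = 0 := by
  rintro _ ⟨α, rfl⟩ _ ⟨β, rfl⟩
  simp only [vecMulLinear_apply, cdot_eq]
  rw [star_vecMul, ← dotProduct_mulVec, mulVec_mulVec, h]
  simp

lemma range_minor {r m : ℕ} {A : Matrix (Fin r) (Fin m) ℂ} {i i' : Fin r} {j j' : Fin m}
    (h : A i j * A i' j' - A i j' * A i' j ≠ 0) :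
    2 ≤ Module.finrank ℂ (LinearMap.range A.vecMulLinear) := by
  have hli : LinearIndependent ℂ ![A i, A i'] := by
    rw [LinearIndependent.pair_iff]
    intro a b hab
    have h1 := congrFun hab j
    have h2 := congrFun hab j'
    simp only [Pi.add_apply, Pi.smul_apply, smul_eq_mul, Pi.zero_apply] at h1 h2
    constructor
    · apply (mul_eq_zero.1 (_ : a * (A i j * A i' j' - A i j' * A i' j) = 0)).resolve_right h
      linear_combination A i' j' * h1 - A i' j * h2
    · apply (mul_eq_zero.1 (_ : b * (A i j * A i' j' - A i j' * A i' j) = 0)).resolve_right h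
      linear_combination A i j * h2 - A i j' * h1
  have := finrank_span_eq_card hli
  simp only [Fintype.card_fin] at this
  refine this.symm.le.trans ?_
  apply Submodule.finrank_mono
  rw [Submodule.span_le]
  rintro _ ⟨k, rfl⟩
  have hrow : ∀ i, A i ∈ LinearMap.range A.vecMulLinear := fun i =>
    ⟨Pi.single i 1, by simp [Matrix.row]⟩
  fin_cases k
  · exact hrow i
  · exact hrow i'

lemma range_full {r m : ℕ} {A : Matrix (Fin r) (Fin m) ℂ} (h : A * Aᴴ = 1) :
    Module.finrank ℂ (LinearMap.range A.vecMulLinear) = r := by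
  rw [LinearMap.finrank_range_of_inj]
  · simp
  · intro x y hxy
    have := congrArg (fun t => t ᵥ* Aᴴ) hxy
    simpa [vecMul_vecMul, h] using this
end helpers

section helpers
open Filter Topology
open scoped Matrix.Norms.Operator

lemma minor_zero {n r' s' : ℕ} (hcodim : s' < r' + 2 * n)
    {U : Set (Fin (n+1) → ℂ)} (hopen : IsOpen U) (hconn : IsPreconnected U)
    {z0 : Fin (n+1) → ℂ} (hz0 : z0 ∈ U) (hz : cdot z0 z0 = 1)
    {F : (Fin (n+1) → ℂ) → Fin r' → Fin s' → ℂ}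
    (hF : DifferentiableOn ℂ F U)
    (horth : ∀ z ∈ U, ∀ w ∈ U, cdot z w = 1 →
      Matrix.of (F z) * (Matrix.of (F w))ᴴ = (1 : Matrix (Fin r') (Fin r') ℂ))
    (i i' : Fin r') (j j' : Fin s') :
    ∀ z ∈ U, ∀ w ∈ U, (F w i j - F z i j) * (F w i' j' - F z i' j') -
      (F w i j' - F z i j') * (F w i' j - F z i' j) = 0 := by
  let P : (Fin (n+1) → ℂ) × (Fin (n+1) → ℂ) → ℂ := fun p =>
    (F p.2 i j - F p.1 i j) * (F p.2 i' j' - F p.1 i' j') -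
      (F p.2 i j' - F p.1 i j') * (F p.2 i' j - F p.1 i' j)
  have hFd : ∀ a b, DifferentiableOn ℂ (fun z => F z a b) U := by
    intro a b
    exact differentiableOn_pi.1 (differentiableOn_pi.1 hF a) b
  have hP : DifferentiableOn ℂ P (U ×ˢ U) := by
    have h1 : ∀ a b, DifferentiableOn ℂ
        (fun p : (Fin (n+1) → ℂ) × (Fin (n+1) → ℂ) => F p.1 a b) (U ×ˢ U) := fun a b =>
      (hFd a b).comp differentiableOn_fst (fun p hp => hp.1)
    have h2 : ∀ a b, DifferentiableOn ℂ
        (fun p : (Fin (n+1) → ℂ) × (Fin (n+1) → ℂ) => F p.2 a b) (U ×ˢ U) := fun a b =>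
      (hFd a b).comp differentiableOn_snd (fun p hp => hp.2)
    exact (((h2 i j).sub (h1 i j)).mul ((h2 i' j').sub (h1 i' j'))).sub
      (((h2 i j').sub (h1 i j')).mul ((h2 i' j).sub (h1 i' j)))
  by_contra hcon
  push Not at hcon
  obtain ⟨za, hza, wa, hwa, hne⟩ := hcon
  obtain ⟨u, hu0, huu⟩ := exists_orth z0 hz
  -- small scaling
  have hsc : ∀ᶠ t : ℝ in 𝓝[>] 0, ∀ k, z0 + (t:ℂ) • u k ∈ U := by
    rw [Filter.eventually_all]
    intro k
    have : Tendsto (fun t : ℝ => z0 + (t:ℂ) • u k) (𝓝 0) (𝓝 z0) := by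
      have hc : Continuous (fun t : ℝ => z0 + (t:ℂ) • u k) := by fun_prop
      simpa using hc.tendsto 0
    exact (this.mono_left nhdsWithin_le_nhds).eventually (hopen.mem_nhds hz0)
  obtain ⟨t, htU, htpos⟩ := (hsc.and self_mem_nhdsWithin).exists
  have htpos : (0:ℝ) < t := htpos
  have ht0 : (t:ℂ) ≠ 0 := by exact_mod_cast htpos.ne'
  let v : Fin n → Fin (n+1) → ℂ := fun k => (t:ℂ) • u k
  have hv0 : ∀ k, cdot (v k) z0 = 0 := by
    intro k; simp only [v, cdot_smul_left, hu0, mul_zero]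
  have hv0' : ∀ k, cdot z0 (v k) = 0 := by
    intro k; rw [← cdot_conj, hv0]; simp
  have hvv : ∀ k l, k ≠ l → cdot (v k) (v l) = 0 := by
    intro k l h; simp only [v, cdot_smul_left, cdot_smul_right, huu, if_neg h, mul_zero]
  have hvk : ∀ k, cdot (v k) (v k) ≠ 0 := by
    intro k; simp only [v, cdot_smul_left, cdot_smul_right, huu]; simp [htpos.ne']
  have hev : ∀ᶠ g : Matrix (Fin (n+1)) (Fin (n+1)) ℂ in 𝓝 1,
      g *ᵥ z0 ∈ U ∧ ∀ k, g *ᵥ (z0 + v k) ∈ U := by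
    refine (mulVec_mem hopen hz0).and ?_
    rw [Filter.eventually_all]
    intro k
    exact mulVec_mem hopen (htU k)
  obtain ⟨ρ, hρ, hball⟩ := Metric.eventually_nhds_iff_ball.1 hev
  let G : Fin n → Matrix (Fin (n+1)) (Fin (n+1)) ℂ → ℂ := fun k g =>
    P (g *ᵥ z0, g *ᵥ (z0 + v k))
  have hGd : ∀ k, ∀ g ∈ Metric.ball (1 : Matrix (Fin (n+1)) (Fin (n+1)) ℂ) ρ,
      DifferentiableAt ℂ (G k) g := by
    intro k g hg
    have hm : (g *ᵥ z0, g *ᵥ (z0 + v k)) ∈ U ×ˢ U := ⟨(hball g hg).1, (hball g hg).2 k⟩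
    have h1 : DifferentiableAt ℂ P (g *ᵥ z0, g *ᵥ (z0 + v k)) :=
      (hP _ hm).differentiableAt ((hopen.prod hopen).mem_nhds hm)
    exact DifferentiableAt.comp (f := fun g : Matrix (Fin (n+1)) (Fin (n+1)) ℂ =>
      (g *ᵥ z0, g *ᵥ (z0 + v k))) g h1 ((mulVec_diff z0 g).prodMk (mulVec_diff (z0 + v k) g))
  have hGne : ∀ k, ∃ p ∈ Metric.ball (1 : Matrix (Fin (n+1)) (Fin (n+1)) ℂ) ρ, G k p ≠ 0 := by
    intro k
    by_contra hcon
    push Not at hcon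
    have h1 := pair_unique P z0 (v k) hz (hv0 k) (hvk k)
      (Filter.eventually_of_mem (Metric.ball_mem_nhds _ hρ) hcon)
    exact hne (id_thm (hopen.prod hopen) (hconn.prod hconn) hP (y := (z0, z0 + v k))
      ⟨hz0, htU k⟩ h1 (za, wa) ⟨hza, hwa⟩)
  have hfreq := prod_nonzero Metric.isOpen_ball (convex_ball _ _).isPreconnected G
    (fun k g hg => (hGd k g hg).differentiableWithinAt) hGne Finset.univ
    (Metric.mem_ball_self hρ)
  have hex : ∃ g : Matrix (Fin (n+1)) (Fin (n+1)) ℂ, g ∈ Metric.ball 1 ρ ∧ gᴴ * g = 1 ∧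
      ∀ k, G k g ≠ 0 := by
    by_contra hcon
    push Not at hcon
    have := unitary_unique (fun g => ∏ k, G k g) ?_ ?_
    · apply hfreq
      filter_upwards [this] with g hg hall
      exact Finset.prod_ne_zero_iff.2 hall hg
    · filter_upwards [Metric.ball_mem_nhds _ hρ] with g hg
      have hS : ∀ S : Finset (Fin n), DifferentiableAt ℂ (fun g => ∏ k ∈ S, G k g) g := by
        intro S
        induction S using Finset.induction_on with
        | empty => simp
        | insert a S ha ih =>
          simp only [Finset.prod_insert ha]
          exact (hGd a g hg).mul ih
      exact hS _
    · filter_upwards [Metric.ball_mem_nhds _ hρ] with g hg hgu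
      obtain ⟨k, hk⟩ := hcon g hg hgu
      exact Finset.prod_eq_zero (Finset.mem_univ k) hk
  obtain ⟨g, hg, hgu, hgG⟩ := hex
  let A : Option (Fin n) → Matrix (Fin r') (Fin s') ℂ := fun o =>
    match o with
    | none => Matrix.of (F (g *ᵥ z0))
    | some k => Matrix.of (F (g *ᵥ (z0 + v k))) - Matrix.of (F (g *ᵥ z0))
  have hzU := (hball g hg).1
  have hvU := (hball g hg).2
  have o00 : Matrix.of (F (g *ᵥ z0)) * (Matrix.of (F (g *ᵥ z0)))ᴴ = 1 :=
    horth _ hzU _ hzU (by rw [cdot_unitary hgu, hz])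
  have ok0 : ∀ k, Matrix.of (F (g *ᵥ (z0 + v k))) * (Matrix.of (F (g *ᵥ z0)))ᴴ = 1 := fun k =>
    horth _ (hvU k) _ hzU (by rw [cdot_unitary hgu, cdot_add_left, hz, hv0, add_zero])
  have o0k : ∀ k, Matrix.of (F (g *ᵥ z0)) * (Matrix.of (F (g *ᵥ (z0 + v k))))ᴴ = 1 := fun k =>
    horth _ hzU _ (hvU k) (by rw [cdot_unitary hgu, cdot_add_right, hz, hv0', add_zero])
  have okl : ∀ k l, k ≠ l →
      Matrix.of (F (g *ᵥ (z0 + v k))) * (Matrix.of (F (g *ᵥ (z0 + v l))))ᴴ = 1 := fun k l h =>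
    horth _ (hvU k) _ (hvU l) (by
      rw [cdot_unitary hgu, cdot_add_right, cdot_add_left, cdot_add_left, hz, hv0', hv0, hvv k l h]
      simp)
  have hAo : ∀ k l, k ≠ l → A k * (A l)ᴴ = 0 := by
    intro k l h
    cases k with
    | none =>
      cases l with
      | none => exact absurd rfl h
      | some l =>
        simp only [A, conjTranspose_sub, Matrix.mul_sub, o0k, o00, sub_self]
    | some k =>
      cases l with
      | none => simp only [A, Matrix.sub_mul, ok0, o00, sub_self]
      | some l =>
        have h' : k ≠ l := fun e => h (by rw [e])
        simp only [A, conjTranspose_sub, Matrix.sub_mul, Matrix.mul_sub, ok0, o00, o0k,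
          okl k l h', sub_self]
  have hdim := orth_dim (fun k => LinearMap.range (A k).vecMulLinear)
    (fun k l h => range_orth (hAo k l h))
  rw [Fintype.sum_option] at hdim
  have h1 : Module.finrank ℂ (LinearMap.range (A none).vecMulLinear) = r' := range_full o00
  have h2 : ∀ k, 2 ≤ Module.finrank ℂ (LinearMap.range (A (some k)).vecMulLinear) := by
    intro k
    exact range_minor (i := i) (i' := i') (j := j) (j' := j') (hgG k)
  have h3 : 2 * n ≤ ∑ k, Module.finrank ℂ (LinearMap.range (A (some k)).vecMulLinear) := by
    calc 2 * n = ∑ k : Fin n, 2 := by simp [mul_comm]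
      _ ≤ _ := Finset.sum_le_sum (fun k _ => h2 k)
  omega
end helpers

section helpers
open Filter Topology

lemma structure_lemma {n r' s' : ℕ} (hr : 0 < r')
    {U : Set (Fin n → ℂ)} (hopen : IsOpen U) (hconn : IsPreconnected U)
    {z0 : Fin n → ℂ} (hz0 : z0 ∈ U) (hz : cdot z0 z0 = 1)
    {F : (Fin n → ℂ) → Fin r' → Fin s' → ℂ}
    (hFd : ∀ a b, DifferentiableOn ℂ (fun z => F z a b) U)
    (hcd : ∀ z ∈ U, cdot z z = 1 → ∀ k k', cdot (F z k) (F z k') = if k = k' then 1 else 0)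
    (hmin : ∀ i i' j j', ∀ z ∈ U, ∀ w ∈ U, (F w i j - F z i j) * (F w i' j' - F z i' j') -
      (F w i j' - F z i j') * (F w i' j - F z i' j) = 0) :
    ∃ a : Fin r' → ℂ, a ≠ 0 ∧ ∀ z ∈ U, ∀ i i' j,
      (F z i j - F z0 i j) * a i' - (F z i' j - F z0 i' j) * a i = 0 := by
  by_cases hD : ∀ z ∈ U, ∀ i j, F z i j - F z0 i j = 0
  · refine ⟨fun _ => 1, ?_, ?_⟩
    · intro h
      have := congrFun h ⟨0, hr⟩
      simp at this
    · intro z hz i i' j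
      rw [hD z hz, hD z hz]; ring
  push Not at hD
  obtain ⟨z1, hz1, i1, j1, hd⟩ := hD
  let D : (Fin n → ℂ) → Fin r' → Fin s' → ℂ := fun z i j => F z i j - F z0 i j
  have hDd : ∀ a b, DifferentiableOn ℂ (fun z => D z a b) U := fun a b =>
    (hFd a b).sub_const _
  let a : Fin r' → ℂ := fun i => D z1 i j1
  let b : Fin s' → ℂ := fun j => D z1 i1 j
  have hd' : D z1 i1 j1 ≠ 0 := hd
  have m1 : ∀ i i' j j', ∀ z ∈ U, D z i j * D z i' j' - D z i j' * D z i' j = 0 :=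
    fun i i' j j' z hz => hmin i i' j j' z0 hz0 z hz
  have m2 : ∀ i i' j j', ∀ z ∈ U, (D z i j - D z1 i j) * (D z i' j' - D z1 i' j') -
      (D z i j' - D z1 i j') * (D z i' j - D z1 i' j) = 0 := by
    intro i i' j j' z hz
    have := hmin i i' j j' z1 hz1 z hz
    simp only [D]
    linear_combination this
  have hab : ∀ i j, a i * b j = D z1 i1 j1 * D z1 i j := by
    intro i j
    have := m1 i1 i j1 j z1 hz1
    simp only [a, b]
    linear_combination -this
  have hpq : ∀ i i' j k l l', ∀ z ∈ U,
      (D z i j * a i' - D z i' j * a i) * (D z k l * b l' - D z k l' * b l) = 0 := by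
    intro i i' j k l l' z hz
    have e1 := m1 i k j l z hz
    have e2 := m1 i k j l' z hz
    have e3 := m1 i' k j l z hz
    have e4 := m1 i' k j l' z hz
    have e5 := m2 i i' l l' z hz
    have e6 := m1 i i' l l' z hz
    have e7 := m1 i i' l l' z1 hz1
    have h1 := hab i l
    have h2 := hab i l'
    have h3 := hab i' l
    have h4 := hab i' l'
    linear_combination a i' * b l' * e1 - a i' * b l * e2 - a i * b l' * e3 + a i * b l * e4
      + D z k j * (D z i l * h4 - D z i' l * h2 - D z i l' * h3 + D z i' l' * h1)
      - D z k j * D z1 i1 j1 * (e5 - e6 - e7)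
  by_cases hp : ∀ z ∈ U, ∀ i i' j, D z i j * a i' - D z i' j * a i = 0
  · refine ⟨a, ?_, hp⟩
    intro h
    exact hd' (congrFun h i1)
  have hq : ∀ z ∈ U, ∀ k l l', D z k l * b l' - D z k l' * b l = 0 := by
    by_contra hcon
    push Not at hp hcon
    obtain ⟨z2, hz2, i, i', j, hp⟩ := hp
    obtain ⟨z3, hz3, k, l, l', hq⟩ := hcon
    let f : Bool → (Fin n → ℂ) → ℂ := fun t => match t with
      | true => fun z => D z i j * a i' - D z i' j * a i
      | false => fun z => D z k l * b l' - D z k l' * b l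
    have hf := prod_nonzero hopen hconn f ?_ ?_ Finset.univ hz0
    · obtain ⟨z, h, hzU⟩ := (hf.and_eventually (hopen.mem_nhds hz0)).exists
      exact mul_ne_zero (h true (Finset.mem_univ _)) (h false (Finset.mem_univ _))
        (hpq i i' j k l l' z hzU)
    · intro t
      cases t
      · exact ((hDd k l).mul_const _).sub ((hDd k l').mul_const _)
      · exact ((hDd i j).mul_const _).sub ((hDd i' j).mul_const _)
    · intro t
      cases t
      · exact ⟨z3, hz3, hq⟩
      · exact ⟨z2, hz2, hp⟩
  -- row type
  have hb : b ≠ 0 := fun h => hd' (congrFun h j1)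
  have hβ : cdot b b ≠ 0 := fun h => hb (cdot_self_eq_zero h)
  have hβr : (starRingEnd ℂ) (cdot b b) = cdot b b := cdot_conj b b
  let c : Fin r' → ℂ := fun k => cdot (F z0 k) b
  let g : (Fin n → ℂ) → Fin r' → ℂ := fun z k => D z k j1 / D z1 i1 j1
  have hDg : ∀ z ∈ U, ∀ k l, D z k l = g z k * b l := by
    intro z hz k l
    have := hq z hz k l j1
    simp only [g]
    have hbj : b j1 = D z1 i1 j1 := rfl
    rw [hbj] at this
    field_simp
    linear_combination this
  have hnullz : ∀ z ∈ U, cdot z z = 1 → ∀ k k',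
      (starRingEnd ℂ) (g z k') * c k + g z k * (starRingEnd ℂ) (c k') +
        g z k * (starRingEnd ℂ) (g z k') * cdot b b = 0 := by
    intro z hzU hzz k k'
    have e : ∀ k, F z k = F z0 k + g z k • b := by
      intro k
      funext l
      have := hDg z hzU k l
      simp only [D] at this
      simp only [Pi.add_apply, Pi.smul_apply, smul_eq_mul]
      linear_combination this
    have h1 := hcd z hzU hzz k k'
    rw [← hcd z0 hz0 hz k k', e k, e k'] at h1
    simp only [cdot_add_left, cdot_add_right, cdot_smul_left, cdot_smul_right] at h1
    simp only [c, cdot_conj]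
    linear_combination h1
  have hconj : ∀ x : ℂ, x * (starRingEnd ℂ) x = 0 → x = 0 := by
    intro x hx
    simpa using hx
  by_cases hc : c = 0
  · exfalso
    apply hd'
    apply sphere_unique hopen hconn (hDd i1 j1) hz0 hz ?_ z1 hz1
    intro z hzU hzz
    have h := hnullz z hzU hzz i1 i1
    rw [hc] at h
    have h2 : g z i1 * (starRingEnd ℂ) (g z i1) = 0 := by
      apply (mul_eq_zero.1 _).resolve_right hβ
      simpa using h
    rw [hDg z hzU, hconj _ h2, zero_mul]
  · refine ⟨c, hc, ?_⟩
    intro z hzU i i' j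
    apply sphere_unique (f := fun z => D z i j * c i' - D z i' j * c i) hopen hconn
      (((hDd i j).mul_const _).sub ((hDd i' j).mul_const _)) hz0 hz ?_ z hzU
    intro z hzU hzz
    have hh : ∀ k k', (cdot b b * g z k + c k) *
        ((starRingEnd ℂ) (cdot b b * g z k' + c k')) = c k * (starRingEnd ℂ) (c k') := by
      intro k k'
      rw [map_add, map_mul, hβr]
      linear_combination cdot b b * hnullz z hzU hzz k k'
    have hx : cdot b b * (g z i * c i' - g z i' * c i) = 0 := by
      apply hconj
      have e : cdot b b * (g z i * c i' - g z i' * c i) =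
        (cdot b b * g z i + c i) * c i' - (cdot b b * g z i' + c i') * c i := by ring
      rw [e]
      have h1 := hh i i
      have h2 := hh i i'
      have h3 := hh i' i
      have h4 := hh i' i'
      generalize cdot b b * g z i + c i = x at *
      generalize cdot b b * g z i' + c i' = y at *
      simp only [map_sub, map_mul]
      linear_combination c i' * (starRingEnd ℂ) (c i') * h1 - c i' * (starRingEnd ℂ) (c i) * h2
        - c i * (starRingEnd ℂ) (c i') * h3 + c i * (starRingEnd ℂ) (c i) * h4
    have hx' := (mul_eq_zero.1 hx).resolve_left hβ
    change D z i j * c i' - D z i' j * c i = 0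
    rw [hDg z hzU, hDg z hzU]
    linear_combination b j * hx'
end helpers

section helpers

lemma cdot_self_re {n : ℕ} (x : Fin n → ℂ) : (cdot x x).re = ∑ i, ‖x i‖ ^ 2 := by
  simp only [cdot, Complex.mul_conj, Complex.re_sum, Complex.ofReal_re, Complex.normSq_eq_norm_sq]

lemma cdot_self_pos {n : ℕ} {x : Fin n → ℂ} (h : x ≠ 0) : 0 < (cdot x x).re := by
  rw [cdot_self_re]
  obtain ⟨i, hi⟩ := Function.ne_iff.1 h
  exact Finset.sum_pos' (fun _ _ => by positivity) ⟨i, Finset.mem_univ i, by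
    have : 0 < ‖x i‖ := norm_pos_iff.2 hi
    positivity⟩

lemma iip_append {a b : ℕ} (α β : Fin a → ℂ) (v w : Fin b → ℂ) :
    iip a b (Fin.append α v) (Fin.append β w) = cdot α β - cdot v w := by
  simp [iip, cdot, Fin.sum_univ_add, sub_eq_add_neg]

def appL (a b : ℕ) : ((Fin a → ℂ) × (Fin b → ℂ)) →ₗ[ℂ] (Fin (a + b) → ℂ) where
  toFun p := Fin.append p.1 p.2
  map_add' p q := by
    funext j
    refine Fin.addCases (fun i => ?_) (fun i => ?_) j <;> simp
  map_smul' c p := by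
    funext j
    refine Fin.addCases (fun i => ?_) (fun i => ?_) j <;> simp

lemma appL_inj (a b : ℕ) : Function.Injective (appL a b) := by
  intro p q h
  have h : Fin.append p.1 p.2 = Fin.append q.1 q.2 := h
  ext i
  · have := congrFun h (Fin.castAdd b i)
    simpa using this
  · have := congrFun h (Fin.natAdd a i)
    simpa using this

lemma iip_appL {a b : ℕ} (p q : (Fin a → ℂ) × (Fin b → ℂ)) :
    iip a b (appL a b p) (appL a b q) = cdot p.1 q.1 - cdot p.2 q.2 := iip_append _ _ _ _

lemma chart_row {r s : ℕ} (Z : Matrix (Fin r) (Fin s) ℂ) (i : Fin r) :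
    chartMat r s Z i = appL r s (Pi.single i 1, Z i) := by
  funext j
  change _ = Fin.append _ _ _
  refine Fin.addCases (fun k => ?_) (fun k => ?_) j
  · simp [chartMat, Pi.single_apply, Fin.ext_iff, eq_comm]
  · simp [chartMat]

lemma cdot_vecMul_left {r m : ℕ} (β : Fin r → ℂ) (M : Matrix (Fin r) (Fin m) ℂ) (w : Fin m → ℂ) :
    cdot (β ᵥ* M) w = ∑ k, β k * cdot (M k) w := by
  rw [cdot_eq, ← dotProduct_mulVec]; rfl

lemma cdot_vecMul_right {r m : ℕ} (β : Fin r → ℂ) (M : Matrix (Fin r) (Fin m) ℂ) (w : Fin m → ℂ) :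
    cdot w (β ᵥ* M) = cdot (w ᵥ* Mᴴ) β := by
  rw [cdot_eq, cdot_eq, star_vecMul, dotProduct_mulVec]

lemma row_mem {r s : ℕ} (Z : Matrix (Fin r) (Fin s) ℂ) (α : Fin r → ℂ) :
    appL r s (α, α ᵥ* Z) ∈ rowSpan (chartMat r s Z) := by
  have : appL r s (α, α ᵥ* Z) = ∑ i, α i • chartMat r s Z i := by
    simp only [chart_row, ← map_smul, ← map_sum]
    congr 1
    ext j
    · simp [Prod.fst_sum, Finset.sum_apply, Pi.single_apply]
    · simp [Prod.snd_sum, Finset.sum_apply, vecMul, dotProduct]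
  rw [this]
  exact Submodule.sum_mem _ fun i _ => Submodule.smul_mem _ _ (Submodule.subset_span ⟨i, rfl⟩)

lemma final_lemma {X : Type*} {r' s' : ℕ} (hr' : 2 ≤ r') (hr's' : r' ≤ s') (U : Set X)
    (F : X → Fin r' → Fin s' → ℂ) (M : Matrix (Fin r') (Fin s') ℂ) (hM : M * Mᴴ = 1)
    (a : Fin r' → ℂ) (ha : a ≠ 0)
    (h1 : ∀ z ∈ U, ∀ α : Fin r' → ℂ, α ⬝ᵥ a = 0 → α ᵥ* Matrix.of (F z) = α ᵥ* M)
    (h2 : ∀ z ∈ U, ∀ α : Fin r' → ℂ, α ⬝ᵥ a = 0 → ∀ k,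
      cdot (F z k) (α ᵥ* M) = (starRingEnd ℂ) (α k)) :
    ∃ N K Kp Km : Submodule ℂ (Fin (r' + s') → ℂ),
      Module.finrank ℂ ↥N = r' - 1 ∧
      (∀ u ∈ N, ∀ v ∈ N, iip r' s' u v = 0) ∧
      Module.finrank ℂ ↥K = s' - r' + 2 ∧
      Kp ⊔ Km = K ∧ Disjoint Kp Km ∧
      Module.finrank ℂ ↥Kp = 1 ∧
      Module.finrank ℂ ↥Km = s' - r' + 1 ∧
      (∀ u ∈ Kp, u ≠ 0 → 0 < (iip r' s' u u).re) ∧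
      (∀ u ∈ Km, u ≠ 0 → (iip r' s' u u).re < 0) ∧
      (∀ u ∈ Kp, ∀ v ∈ Km, iip r' s' u v = 0) ∧
      (∀ u ∈ N, ∀ v ∈ K, iip r' s' u v = 0) ∧
      ∀ z ∈ U,
        N ≤ rowSpan (chartMat r' s' (Matrix.of (F z))) ∧
        rowSpan (chartMat r' s' (Matrix.of (F z))) ≤ N ⊔ K := by
  set e : Fin r' → ℂ := star a with he
  have hstar : star e = a := by simp [he]
  have he0 : e ≠ 0 := by intro h; apply ha; rw [← hstar, h]; simp
  have hea : e ⬝ᵥ a = cdot e e := by rw [cdot_eq, hstar]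
  have hee : cdot e e ≠ 0 := fun h => he0 (cdot_self_eq_zero h)
  have hαe : ∀ α, cdot α e = α ⬝ᵥ a := by intro α; rw [cdot_eq, hstar]
  have heα : ∀ α : Fin r' → ℂ, α ⬝ᵥ a = 0 → cdot e α = 0 := by
    intro α h; rw [← cdot_conj, hαe, h]; simp
  -- double orthogonal
  have hspan : ∀ y : Fin r' → ℂ, (∀ α : Fin r' → ℂ, α ⬝ᵥ a = 0 → cdot y α = 0) →
      y ∈ Submodule.span ℂ {e} := by
    intro y hy
    let t := (y ⬝ᵥ a) / cdot e e
    have hα : (y + (-t) • e) ⬝ᵥ a = 0 := by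
      rw [add_dotProduct, smul_dotProduct, hea]
      simp only [t, smul_eq_mul]; field_simp; ring
    have : cdot (y + (-t) • e) (y + (-t) • e) = 0 := by
      rw [cdot_add_left, hy _ hα, cdot_smul_left, heα _ hα]; simp
    have := cdot_self_eq_zero this
    rw [Submodule.mem_span_singleton]
    refine ⟨t, ?_⟩
    rw [neg_smul, add_neg_eq_zero] at this
    exact this.symm
  let φ : (Fin r' → ℂ) →ₗ[ℂ] ℂ :=
    { toFun := fun α => α ⬝ᵥ a
      map_add' := fun x y => add_dotProduct x y a
      map_smul' := fun c x => smul_dotProduct c x a }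
  have hφs : Function.Surjective φ := by
    intro c
    refine ⟨(c / cdot e e) • e, ?_⟩
    change ((c / cdot e e) • e) ⬝ᵥ a = c
    rw [smul_dotProduct, hea, smul_eq_mul]; field_simp
  have hφ : Module.finrank ℂ (LinearMap.ker φ) = r' - 1 := by
    have := LinearMap.finrank_range_add_finrank_ker φ
    rw [LinearMap.range_eq_top.2 hφs] at this
    simp at this
    omega
  let jN : (Fin r' → ℂ) →ₗ[ℂ] (Fin (r' + s') → ℂ) :=
    appL r' s' ∘ₗ (LinearMap.id.prod M.vecMulLinear)
  have hjN : Function.Injective jN := by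
    refine (appL_inj r' s').comp ?_
    intro x y h
    exact congrArg Prod.fst h
  let jp : (Fin r' → ℂ) →ₗ[ℂ] (Fin (r' + s') → ℂ) := appL r' s' ∘ₗ LinearMap.inl ℂ _ _
  have hjp : Function.Injective jp := (appL_inj r' s').comp LinearMap.inl_injective
  let jm : (Fin s' → ℂ) →ₗ[ℂ] (Fin (r' + s') → ℂ) := appL r' s' ∘ₗ LinearMap.inr ℂ _ _
  have hjm : Function.Injective jm := (appL_inj r' s').comp LinearMap.inr_injective
  let L : (Fin s' → ℂ) →ₗ[ℂ] (Fin r' → ℂ) := Mᴴ.vecMulLinear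
  have hLs : Function.Surjective L := by
    intro y
    refine ⟨y ᵥ* M, ?_⟩
    simp [L, vecMul_vecMul, hM]
  let S : Submodule ℂ (Fin r' → ℂ) := Submodule.span ℂ {e}
  have hS : Module.finrank ℂ S = 1 := finrank_span_singleton he0
  let T : Submodule ℂ (Fin s' → ℂ) := LinearMap.ker (S.mkQ ∘ₗ L)
  have hTmem : ∀ v, v ∈ T ↔ v ᵥ* Mᴴ ∈ S := by
    intro v
    simp [T, L]
  have hT : Module.finrank ℂ T = s' - r' + 1 := by
    have h3 := LinearMap.finrank_range_add_finrank_ker (S.mkQ ∘ₗ L)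
    rw [LinearMap.range_eq_top.2 (by
      rw [LinearMap.coe_comp]; exact (Submodule.mkQ_surjective S).comp hLs)] at h3
    have h4 := Submodule.finrank_quotient_add_finrank S
    simp only [finrank_top, Module.finrank_fintype_fun_eq_card, Fintype.card_fin] at h3 h4
    change _ + Module.finrank ℂ T = _ at h3
    omega
  let N := (LinearMap.ker φ).map jN
  let Kp := S.map jp
  let Km := T.map jm
  have fN : Module.finrank ℂ N = r' - 1 := by
    rw [← hφ]; exact ((Submodule.equivMapOfInjective jN hjN _).finrank_eq).symm
  have fp : Module.finrank ℂ Kp = 1 := by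
    rw [← hS]; exact ((Submodule.equivMapOfInjective jp hjp _).finrank_eq).symm
  have fm : Module.finrank ℂ Km = s' - r' + 1 := by
    rw [← hT]; exact ((Submodule.equivMapOfInjective jm hjm _).finrank_eq).symm
  have ppos : ∀ u ∈ Kp, u ≠ 0 → 0 < (iip r' s' u u).re := by
    rintro _ ⟨x, hx, rfl⟩ hne
    have hx0 : x ≠ 0 := by rintro rfl; simp at hne
    have : iip r' s' (jp x) (jp x) = cdot x x - cdot 0 0 := iip_appL _ _
    rw [this]
    simpa [cdot] using cdot_self_pos hx0
  have mneg : ∀ u ∈ Km, u ≠ 0 → (iip r' s' u u).re < 0 := by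
    rintro _ ⟨x, hx, rfl⟩ hne
    have hx0 : x ≠ 0 := by rintro rfl; simp at hne
    have : iip r' s' (jm x) (jm x) = cdot 0 0 - cdot x x := iip_appL _ _
    rw [this]
    simpa [cdot] using cdot_self_pos hx0
  have hdisj : Disjoint Kp Km := by
    rw [Submodule.disjoint_def]
    intro x hp hm
    by_contra hx
    exact lt_asymm (ppos x hp hx) (mneg x hm hx)
  refine ⟨N, Kp ⊔ Km, Kp, Km, fN, ?_, ?_, rfl, hdisj, fp, fm, ppos, mneg, ?_, ?_, ?_⟩
  · rintro _ ⟨α, hα, rfl⟩ _ ⟨β, hβ, rfl⟩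
    have : iip r' s' (jN α) (jN β) = cdot α β - cdot (α ᵥ* M) (β ᵥ* M) := iip_appL _ _
    rw [this, cdot_vecMul_right, vecMul_vecMul, hM, vecMul_one, sub_self]
  · have := Submodule.finrank_sup_add_finrank_inf_eq Kp Km
    rw [hdisj.eq_bot, finrank_bot, fp, fm] at this
    omega
  · rintro _ ⟨x, hx, rfl⟩ _ ⟨y, hy, rfl⟩
    have : iip r' s' (jp x) (jm y) = cdot x 0 - cdot 0 y := iip_appL _ _
    rw [this]; simp [cdot]
  · rintro _ ⟨α, hα, rfl⟩ v hv
    have hα : α ⬝ᵥ a = 0 := hα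
    obtain ⟨_, ⟨x, hx, rfl⟩, _, ⟨y, hy, rfl⟩, rfl⟩ := Submodule.mem_sup.1 hv
    have e1 : jp x + jm y = appL r' s' (x, y) := by
      simp only [jp, jm, LinearMap.comp_apply, ← map_add]; simp
    have : iip r' s' (jN α) (appL r' s' (x, y)) = cdot α x - cdot (α ᵥ* M) y := iip_appL _ _
    rw [e1, this]
    obtain ⟨t, rfl⟩ := Submodule.mem_span_singleton.1 hx
    obtain ⟨t', ht'⟩ := Submodule.mem_span_singleton.1 ((hTmem y).1 hy)
    rw [cdot_smul_right, hαe, hα, ← cdot_conj y, cdot_vecMul_right, ← ht', cdot_smul_left,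
      heα α hα]
    simp
  · intro z hz
    constructor
    · rintro _ ⟨α, hα, rfl⟩
      have := row_mem (Matrix.of (F z)) α
      rw [h1 z hz α hα] at this
      exact this
    · rw [rowSpan, Submodule.span_le]
      rintro _ ⟨i, rfl⟩
      let t := ((Pi.single i 1 : Fin r' → ℂ) ⬝ᵥ a) / cdot e e
      let α : Fin r' → ℂ := Pi.single i 1 + (-t) • e
      have hα : α ⬝ᵥ a = 0 := by
        simp only [α]
        rw [add_dotProduct, smul_dotProduct, hea]
        simp only [t, smul_eq_mul]; field_simp; ring
      have hy : e ᵥ* Matrix.of (F z) ∈ T := by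
        rw [hTmem]
        apply hspan
        intro α hα
        rw [← cdot_vecMul_right, cdot_vecMul_left]
        have : ∀ k, cdot (Matrix.of (F z) k) (α ᵥ* M) = (starRingEnd ℂ) (α k) := h2 z hz α hα
        simp only [this]
        exact heα α hα
      have hrow : chartMat r' s' (Matrix.of (F z)) i =
          jN α + (jp (t • e) + jm (t • (e ᵥ* Matrix.of (F z)))) := by
        rw [chart_row]
        simp only [jN, jp, jm, LinearMap.comp_apply, ← map_add]
        congr 1
        ext1
        · simp [α]
        · change Matrix.of (F z) i = α ᵥ* M + (0 + t • (e ᵥ* Matrix.of (F z)))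
          rw [← h1 z hz α hα]
          simp [α, add_vecMul, Matrix.row, neg_vecMul, smul_vecMul]
      change chartMat r' s' (Matrix.of (F z)) i ∈ _
      rw [hrow]
      refine Submodule.add_mem_sup ⟨α, hα, rfl⟩ (Submodule.add_mem_sup ⟨_, ?_, rfl⟩ ⟨_, ?_, rfl⟩)
      · exact Submodule.smul_mem _ _ (Submodule.mem_span_singleton_self e)
      · exact Submodule.smul_mem _ _ hy
end helpers

/-- Let `s ≥ 2`, `2 ≤ r' ≤ s'` with `s' − r' < 2(s − 1)`, and let `F` be
a non-null local orthogonal map in chart form from `𝒢(1,s)` to `𝒢(r',s')`.  Then there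
exist subspaces `N, K ⊆ ℂ^{r'+s'}`: `N` is `(r'−1)`-dimensional and totally isotropic;
`K` is `(s'−r'+2)`-dimensional and decomposes as `K = K₊ ⊕ K₋` with `⟨·,·⟩_{r',s'}`
positive definite on the line `K₊`, negative definite on the `(s'−r'+1)`-dimensional
`K₋`, and `K₊ ⊥ K₋`; moreover `N ⊥ K` and
`N ⊆ rowSpan([I_{r'} | F(z)]) ⊆ N ⊕ K` for all `z ∈ U`. -/
theorem sandwich_decomposition_of_nonnull_orthogonal_map
    (s r' s' : ℕ) (hs : 2 ≤ s) (hr' : 2 ≤ r') (hr's' : r' ≤ s')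
    (hcodim : (s' : ℤ) - (r' : ℤ) < 2 * ((s : ℤ) - 1))
    (U : Set (Fin s → ℂ)) (hopen : IsOpen U) (hconn : IsPreconnected U)
    (hnull : ∃ z ∈ U, cdot z z = 1)
    (F : (Fin s → ℂ) → Fin r' → Fin s' → ℂ)
    (hF : DifferentiableOn ℂ F U)
    (horth : ∀ z ∈ U, ∀ w ∈ U, cdot z w = 1 →
      Matrix.of (F z) * (Matrix.of (F w))ᴴ = (1 : Matrix (Fin r') (Fin r') ℂ))
    (hnonnull : ∃ z₁ ∈ U,
      Matrix.of (F z₁) * (Matrix.of (F z₁))ᴴ ≠ (1 : Matrix (Fin r') (Fin r') ℂ)) :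
    ∃ N K Kp Km : Submodule ℂ (Fin (r' + s') → ℂ),
      Module.finrank ℂ ↥N = r' - 1 ∧
      (∀ u ∈ N, ∀ v ∈ N, iip r' s' u v = 0) ∧
      Module.finrank ℂ ↥K = s' - r' + 2 ∧
      Kp ⊔ Km = K ∧ Disjoint Kp Km ∧
      Module.finrank ℂ ↥Kp = 1 ∧
      Module.finrank ℂ ↥Km = s' - r' + 1 ∧
      (∀ u ∈ Kp, u ≠ 0 → 0 < (iip r' s' u u).re) ∧
      (∀ u ∈ Km, u ≠ 0 → (iip r' s' u u).re < 0) ∧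
      (∀ u ∈ Kp, ∀ v ∈ Km, iip r' s' u v = 0) ∧
      (∀ u ∈ N, ∀ v ∈ K, iip r' s' u v = 0) ∧
      ∀ z ∈ U,
        N ≤ rowSpan (chartMat r' s' (Matrix.of (F z))) ∧
        rowSpan (chartMat r' s' (Matrix.of (F z))) ≤ N ⊔ K := by
  obtain ⟨n, rfl⟩ : ∃ n, s = n + 1 := ⟨s - 1, by omega⟩
  obtain ⟨z0, hz0, hz⟩ := hnull
  have hFd : ∀ a b, DifferentiableOn ℂ (fun z => F z a b) U := by
    intro a b
    exact differentiableOn_pi.1 (differentiableOn_pi.1 hF a) b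
  have hcd : ∀ z ∈ U, cdot z z = 1 → ∀ k k', cdot (F z k) (F z k') = if k = k' then 1 else 0 := by
    intro z hzU hzz k k'
    have := congrFun (congrFun (horth z hzU z hzU hzz) k) k'
    rw [Matrix.one_apply] at this
    exact this
  have hmin := fun i i' j j' => minor_zero (n := n) (r' := r') (s' := s')
    (by push_cast at hcodim; omega) hopen hconn hz0 hz hF horth i i' j j'
  obtain ⟨a, ha, hall⟩ := structure_lemma (by omega) hopen hconn hz0 hz hFd hcd hmin
  have h1 : ∀ z ∈ U, ∀ α : Fin r' → ℂ, α ⬝ᵥ a = 0 →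
      α ᵥ* Matrix.of (F z) = α ᵥ* Matrix.of (F z0) := by
    intro z hzU α hα
    obtain ⟨i0, hi0⟩ := Function.ne_iff.1 ha
    have hi0 : a i0 ≠ 0 := hi0
    funext j
    rw [← sub_eq_zero]
    apply (mul_eq_zero.1 (_ : _ * a i0 = 0)).resolve_right hi0
    simp only [vecMul, dotProduct, Matrix.of_apply, ← Finset.sum_sub_distrib]
    rw [Finset.sum_mul]
    have : ∀ i, (α i * F z i j - α i * F z0 i j) * a i0 =
        (F z i0 j - F z0 i0 j) * (α i * a i) := by
      intro i
      linear_combination α i * hall z hzU i i0 j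
    simp only [this]
    rw [← Finset.mul_sum]
    have hα' : ∑ i, α i * a i = 0 := hα
    rw [hα', mul_zero]
  refine final_lemma hr' hr's' U F (Matrix.of (F z0)) (horth z0 hz0 z0 hz0 hz) a ha h1 ?_
  intro z hzU α hα k
  rw [← sub_eq_zero]
  refine sphere_unique (f := fun z => cdot (F z k) (α ᵥ* Matrix.of (F z0)) -
    (starRingEnd ℂ) (α k)) hopen hconn ?_ hz0 hz ?_ z hzU
  · apply DifferentiableOn.sub_const
    simp only [cdot]
    apply DifferentiableOn.fun_sum
    intro i _
    exact (hFd k i).mul_const _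
  · intro z hzU hzz
    change cdot (F z k) (α ᵥ* Matrix.of (F z0)) - (starRingEnd ℂ) (α k) = 0
    rw [← h1 z hzU α hα, ← cdot_conj, cdot_vecMul_left]
    have : ∀ i, cdot (Matrix.of (F z) i) (F z k) = if i = k then 1 else 0 := fun i =>
      hcd z hzU hzz i k
    simp [this]
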